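/- Let 𝕄 be a partial mixed graph, Y a vertex of 𝕄, M a completion of 𝕄, and V a vertex. Let Q_V = {V' ∈ Anc(Y,𝕄) : V and V' are adjacent in 𝕄 and the mark at V on the edge V–V' is a circle}. If the induced subgraph 𝕄[Q_V] is not a complete graph (i.e., some two vertices of Q_V are nonadjacent in 𝕄), then V is an ancestor of Y in M. -/

import Mathlib

/-- Marks at edge ends in a partial mixed graph. -/
inductive Mark : Type
  | tail
  | arrow
  | circle
deriving DecidableEq

/-- A partial mixed graph (PMG): a symmetric irreflexive adjacency relation together
with, for each ordered pair `(a, b)` of adjacent vertices, a mark `mark a b` at `b` on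
the edge `a–b`, such that no edge has tails at both endpoints. -/
structure PMG (V : Type) where
  adj : V → V → Prop
  symm : ∀ a b, adj a b → adj b a
  irrefl : ∀ a, ¬ adj a a
  mark : V → V → Mark
  noDoubleTail : ∀ a b, adj a b → ¬ (mark a b = Mark.tail ∧ mark b a = Mark.tail)

namespace PMG

variable {V : Type}

/-- `a → b`: adjacent, tail at `a`, arrowhead at `b`. -/
def dir (G : PMG V) (a b : V) : Prop :=
  G.adj a b ∧ G.mark b a = Mark.tail ∧ G.mark a b = Mark.arrow

/-- `a ↔ b`: adjacent, arrowheads at both endpoints. -/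
def bidir (G : PMG V) (a b : V) : Prop :=
  G.adj a b ∧ G.mark b a = Mark.arrow ∧ G.mark a b = Mark.arrow

/-- `a` is an ancestor of `b`: `a = b` or there is a directed path from `a` to `b`. -/
def Anc (G : PMG V) (a b : V) : Prop :=
  Relation.ReflTransGen G.dir a b

/-- `a` is an ancestor of some vertex of the set `S`. -/
def AncSet (G : PMG V) (a : V) (S : Set V) : Prop :=
  ∃ v ∈ S, G.Anc a v

/-- A mixed graph: a PMG with no circle marks. -/
def IsMixed (G : PMG V) : Prop :=
  ∀ a b, G.adj a b → G.mark a b ≠ Mark.circle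

/-- Ancestral: no directed cycles and no almost directed cycles. -/
def Ancestral (G : PMG V) : Prop :=
  ∀ a b, G.Anc a b → a ≠ b → ¬ G.dir b a ∧ ¬ G.bidir a b

/-- Unshielded collider `(a, b, c)`: `a, c` both adjacent to `b`, `a` and `c`
distinct and nonadjacent, arrowheads at `b` on both edges. -/
def UnshieldedCollider (G : PMG V) (a b c : V) : Prop :=
  a ≠ c ∧ G.adj a b ∧ G.adj c b ∧ ¬ G.adj a c ∧
    G.mark a b = Mark.arrow ∧ G.mark c b = Mark.arrow

/-- `M` is a completion of the PMG `H`: same vertices and adjacencies, all non-circle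
marks of `H` occur identically in `M`, `M` is an ancestral mixed graph, and every
unshielded collider of `M` is already an unshielded collider of `H`. -/
def Completion (H M : PMG V) : Prop :=
  (∀ a b, M.adj a b ↔ H.adj a b) ∧
  (∀ a b, H.adj a b → H.mark a b ≠ Mark.circle → M.mark a b = H.mark a b) ∧
  M.IsMixed ∧ M.Ancestral ∧
  (∀ a b c, M.UnshieldedCollider a b c → H.UnshieldedCollider a b c)

/-- An edge usable in a possible directed path from `a` to `b`:
adjacent, no arrowhead at `a`, no tail at `b`. -/
def possEdge (G : PMG V) (a b : V) : Prop :=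
  G.adj a b ∧ G.mark b a ≠ Mark.arrow ∧ G.mark a b ≠ Mark.tail

/-- A circle edge: adjacent with circle marks at both endpoints. -/
def circleEdge (G : PMG V) (a b : V) : Prop :=
  G.adj a b ∧ G.mark a b = Mark.circle ∧ G.mark b a = Mark.circle

/-- `p 0, …, p n` is a path: distinct vertices, consecutive ones adjacent. -/
def IsPathOn (G : PMG V) (p : ℕ → V) (n : ℕ) : Prop :=
  (∀ i ≤ n, ∀ j ≤ n, p i = p j → i = j) ∧ ∀ i < n, G.adj (p i) (p (i+1))

/-- `p 0, …, p n` is a possible directed path. -/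
def IsPossDirPathOn (G : PMG V) (p : ℕ → V) (n : ℕ) : Prop :=
  (∀ i ≤ n, ∀ j ≤ n, p i = p j → i = j) ∧ ∀ i < n, G.possEdge (p i) (p (i+1))

/-- `p 0, …, p n` is a circle path. -/
def IsCirclePathOn (G : PMG V) (p : ℕ → V) (n : ℕ) : Prop :=
  (∀ i ≤ n, ∀ j ≤ n, p i = p j → i = j) ∧ ∀ i < n, G.circleEdge (p i) (p (i+1))

/-- The path `p 0, …, p n` is uncovered: any two nonconsecutive neighbours of an
internal vertex are nonadjacent. -/
def UncoveredOn (G : PMG V) (p : ℕ → V) (n : ℕ) : Prop :=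
  ∀ i, i + 2 ≤ n → ¬ G.adj (p i) (p (i+2))

/-- `F_x` relative to `V'`: the vertices of `V'` adjacent to `x` whose edge carries
a circle or an arrowhead at `x`. -/
def Fset (G : PMG V) (V' : Set V) (x : V) : Set V :=
  {v | v ∈ V' ∧ G.adj v x ∧ (G.mark v x = Mark.circle ∨ G.mark v x = Mark.arrow)}

/-- `p 0, …, p n` is an unbridged path relative to `V'` in `G`: an uncovered circle
path with at least one edge, lying in `G[−V']`, with
`F_{p 0} \ F_{p 1} ≠ ∅` and `F_{p n} \ F_{p (n-1)} ≠ ∅`. -/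
def UnbridgedOn (G : PMG V) (V' : Set V) (p : ℕ → V) (n : ℕ) : Prop :=
  1 ≤ n ∧ G.IsCirclePathOn p n ∧ G.UncoveredOn p n ∧
  (∀ i ≤ n, p i ∉ V') ∧
  (G.Fset V' (p 0) \ G.Fset V' (p 1)).Nonempty ∧
  (G.Fset V' (p n) \ G.Fset V' (p (n-1))).Nonempty

/-- The set `S_A`: `A` together with all vertices adjacent to `A` whose edge has an
arrowhead at `A`. -/
def SA (G : PMG V) (A : V) : Set V :=
  {A} ∪ {v | G.adj v A ∧ G.mark v A = Mark.arrow}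

end PMG

namespace PMG

/-- `Q_v`: the vertices `v'` that are ancestors of `Y` in `G`, adjacent to `v`,
with a circle at `v` on the edge `v–v'`. -/
def QV {V : Type} (G : PMG V) (Y v : V) : Set V :=
  {v' | G.Anc v' Y ∧ G.adj v v' ∧ G.mark v' v = Mark.circle}

end PMG

/-- If the induced subgraph of the PMG `𝕄` on `Q_v` is not complete (some two of
its vertices are nonadjacent), then `v` is an ancestor of `Y` in every completion
`M` of `𝕄`. -/
theorem ancestor_of_Y_of_QV_not_complete {V : Type} (H M : PMG V)
    (hHM : PMG.Completion H M) (Y v : V)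
    (hnc : ∃ a ∈ H.QV Y v, ∃ b ∈ H.QV Y v, a ≠ b ∧ ¬ H.adj a b) :
    M.Anc v Y := by
  obtain ⟨hadj, hmark, hmix, -, huc⟩ := hHM
  obtain ⟨a, ⟨haY, hva, hca⟩, b, ⟨hbY, hvb, hcb⟩, hab, hnab⟩ := hnc
  have mono : ∀ x, H.Anc x Y → M.Anc x Y := by
    intro x hx
    refine Relation.ReflTransGen.mono ?_ _ _ hx
    rintro p q ⟨h1, h2, h3⟩
    refine ⟨(hadj p q).2 h1, ?_, ?_⟩
    · rw [hmark q p (H.symm _ _ h1) (by simp [h2]), h2]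
    · rw [hmark p q h1 (by simp [h3]), h3]
  have key : ∀ x, H.adj v x → H.Anc x Y → M.mark x v = Mark.tail → M.Anc v Y := by
    intro x hvx hx ht
    refine Relation.ReflTransGen.head ⟨(hadj v x).2 hvx, ht, ?_⟩ (mono x hx)
    have h1 := hmix v x ((hadj v x).2 hvx)
    have h2 := M.noDoubleTail v x ((hadj v x).2 hvx)
    cases h : M.mark v x <;> simp_all
  have hav := (hadj a v).2 (H.symm _ _ hva)
  have hbv := (hadj b v).2 (H.symm _ _ hvb)
  have ha := hmix a v hav
  have hb := hmix b v hbv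
  cases h : M.mark a v with
  | tail => exact key a hva haY h
  | circle => exact absurd h ha
  | arrow =>
    cases h' : M.mark b v with
    | tail => exact key b hvb hbY h'
    | circle => exact absurd h' hb
    | arrow =>
      have := (huc a v b ⟨hab, hav, hbv, fun h => hnab ((hadj a b).1 h), h, h'⟩).2.2.2.2.1
      rw [hca] at this
      cases this
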